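/- Let δ > 0, σ = 1, and t ≥ 0. Then lim_{λ→+∞} λ u_λ(t) = 1 − e^{−t/(2δ)}, where u_λ(t) is the solution with constant forcing term 1 and null initial data, defined for all λ large enough that δ²λ² > λ. -/

import Mathlib

open Filter

/-- `x₁(λ) = δλ^σ + (δ²λ^{2σ} − λ)^{1/2}`, minus the smaller root of
`x² + 2δλ^σ x + λ` in the supercritical regime. -/
noncomputable def x1 (δ σ lam : ℝ) : ℝ :=
  δ * lam ^ σ + (δ ^ 2 * lam ^ (2 * σ) - lam) ^ ((1 : ℝ) / 2)

/-- `x₂(λ) = δλ^σ − (δ²λ^{2σ} − λ)^{1/2}`, minus the larger root of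
`x² + 2δλ^σ x + λ` in the supercritical regime. -/
noncomputable def x2 (δ σ lam : ℝ) : ℝ :=
  δ * lam ^ σ - (δ ^ 2 * lam ^ (2 * σ) - lam) ^ ((1 : ℝ) / 2)

/-- The solution of `u'' + 2δλ^σ u' + λu = 1`, `u(0) = u'(0) = 0`. -/
noncomputable def uSol (δ σ lam t : ℝ) : ℝ :=
  1 / lam + (x2 δ σ lam * Real.exp (-(x1 δ σ lam) * t)
    - x1 δ σ lam * Real.exp (-(x2 δ σ lam) * t)) / (lam * (x1 δ σ lam - x2 δ σ lam))

/-- The derivative of the above solution. -/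
noncomputable def uDer (δ σ lam t : ℝ) : ℝ :=
  (Real.exp (-(x2 δ σ lam) * t) - Real.exp (-(x1 δ σ lam) * t))
    / (x1 δ σ lam - x2 δ σ lam)

/-- The normalized discriminant root `(δ² − 1/λ)^{1/2}` of the case `σ = 1`. -/
noncomputable def discRoot (δ lam : ℝ) : ℝ :=
  Real.sqrt (δ ^ 2 - lam⁻¹)

lemma discRoot_tendsto {δ : ℝ} (hδ : 0 ≤ δ) :
    Tendsto (discRoot δ) atTop (nhds δ) := by
  have h : Tendsto (fun lam : ℝ => δ ^ 2 - lam⁻¹) atTop (nhds (δ ^ 2)) := by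
    simpa using tendsto_inv_atTop_zero.const_sub (δ ^ 2)
  have h' := h.sqrt
  rwa [Real.sqrt_sq hδ] at h'

lemma disc_rpow_sigma_one (δ : ℝ) {lam : ℝ} (hlam : 0 < lam) :
    (δ ^ 2 * lam ^ (2 * (1 : ℝ)) - lam) ^ ((1 : ℝ) / 2) = lam * discRoot δ lam := by
  have h : δ ^ 2 * lam ^ (2 * (1 : ℝ)) - lam = lam ^ 2 * (δ ^ 2 - lam⁻¹) := by
    rw [mul_one, Real.rpow_two]
    field_simp
  rw [← Real.sqrt_eq_rpow, h, Real.sqrt_mul (sq_nonneg lam), Real.sqrt_sq hlam.le, discRoot]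

lemma x1_sigma_one (δ : ℝ) {lam : ℝ} (hlam : 0 < lam) :
    x1 δ 1 lam = lam * (δ + discRoot δ lam) := by
  rw [x1, disc_rpow_sigma_one δ hlam, Real.rpow_one]
  ring

lemma x2_sigma_one (δ : ℝ) {lam : ℝ} (hlam : 0 < lam) :
    x2 δ 1 lam = lam * (δ - discRoot δ lam) := by
  rw [x2, disc_rpow_sigma_one δ hlam, Real.rpow_one]
  ring

lemma mul_sub_discRoot {δ lam : ℝ} (hδ : 0 < δ) (hlam : 0 < lam) (h : lam⁻¹ ≤ δ ^ 2) :
    lam * (δ - discRoot δ lam) = 1 / (δ + discRoot δ lam) := by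
  have hr : 0 ≤ discRoot δ lam := Real.sqrt_nonneg _
  have hsq : discRoot δ lam ^ 2 = δ ^ 2 - lam⁻¹ := Real.sq_sqrt (sub_nonneg.2 h)
  rw [eq_div_iff (by positivity)]
  calc lam * (δ - discRoot δ lam) * (δ + discRoot δ lam)
      = lam * (δ ^ 2 - discRoot δ lam ^ 2) := by ring
    _ = 1 := by rw [hsq, sub_sub_cancel, mul_inv_cancel₀ hlam.ne']

lemma lam_mul_uSol_sigma_one {δ lam : ℝ} (t : ℝ) (hδ : 0 < δ) (hlam : 0 < lam)
    (h : lam⁻¹ < δ ^ 2) :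
    lam * uSol δ 1 lam t =
      1 + ((δ - discRoot δ lam) / (2 * discRoot δ lam)
          * Real.exp (-(lam * (δ + discRoot δ lam)) * t)
        - (δ + discRoot δ lam) / (2 * discRoot δ lam)
          * Real.exp (-t / (δ + discRoot δ lam))) := by
  have hr : 0 < discRoot δ lam := Real.sqrt_pos.2 (sub_pos.2 h)
  have he : -(x2 δ 1 lam) * t = -t / (δ + discRoot δ lam) := by
    rw [x2_sigma_one δ hlam, mul_sub_discRoot hδ hlam h.le]
    ring
  have hd : x1 δ 1 lam - x2 δ 1 lam = lam * (2 * discRoot δ lam) := by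
    rw [x1_sigma_one δ hlam, x2_sigma_one δ hlam]
    ring
  rw [uSol, he, hd, x1_sigma_one δ hlam, x2_sigma_one δ hlam]
  field_simp

/-- for `δ > 0`, `σ = 1` and `t ≥ 0`, `λ u_λ(t) → 1 − e^{−t/(2δ)}`
as `λ → +∞`. -/
theorem lam_mul_uSol_tendsto_sigma_one (δ t : ℝ) (hδ : 0 < δ) (ht : 0 ≤ t) :
    Tendsto (fun lam : ℝ => lam * uSol δ 1 lam t) atTop
      (nhds (1 - Real.exp (-t / (2 * δ)))) := by
  have hr := discRoot_tendsto hδ.le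
  have h2r : Tendsto (fun lam => 2 * discRoot δ lam) atTop (nhds (2 * δ)) := hr.const_mul 2
  have hsum : Tendsto (fun lam => δ + discRoot δ lam) atTop (nhds (2 * δ)) := by
    simpa [two_mul] using hr.const_add δ
  have hfast : Tendsto (fun lam => (δ - discRoot δ lam) / (2 * discRoot δ lam)
      * Real.exp (-(lam * (δ + discRoot δ lam)) * t)) atTop (nhds 0) := by
    have hcoef : Tendsto (fun lam => (δ - discRoot δ lam) / (2 * discRoot δ lam))
        atTop (nhds 0) := by
      have h := (hr.const_sub δ).div h2r (by positivity)
      rwa [sub_self, zero_div] at h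
    refine squeeze_zero_norm' ?_ (tendsto_zero_iff_norm_tendsto_zero.1 hcoef)
    filter_upwards [eventually_ge_atTop (0 : ℝ)] with lam hlam
    have hnn : 0 ≤ discRoot δ lam := Real.sqrt_nonneg _
    rw [norm_mul]
    refine mul_le_of_le_one_right (norm_nonneg _) ?_
    rw [Real.norm_eq_abs, Real.abs_exp, Real.exp_le_one_iff, neg_mul, neg_nonpos]
    positivity
  have hslow : Tendsto (fun lam => (δ + discRoot δ lam) / (2 * discRoot δ lam)
      * Real.exp (-t / (δ + discRoot δ lam))) atTop (nhds (Real.exp (-t / (2 * δ)))) := by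
    have hcoef := hsum.div h2r (by positivity)
    have hexp := ((tendsto_const_nhds (x := -t)).div hsum (by positivity)).rexp
    have h := hcoef.mul hexp
    rwa [div_self (by positivity), one_mul] at h
  have hlim := (hfast.sub hslow).const_add 1
  rw [zero_sub, ← sub_eq_add_neg] at hlim
  refine hlim.congr' ?_
  filter_upwards [eventually_gt_atTop (0 : ℝ),
    tendsto_inv_atTop_zero.eventually_lt_const (by positivity : 0 < δ ^ 2)] with lam hlam h
  exact (lam_mul_uSol_sigma_one t hδ hlam h).symm
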